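/- Let P₁(θ) = A cos θ + B sin θ with A² + B² ≠ 0, P̄₁(θ) = A sin θ − B cos θ, and λ = (A² + B²)/2. For each integer k ≥ 0 and each j with 0 ≤ j ≤ k, write A_{2k+1}^{2j+1} = (1/π)∫₀^{2π} P̄₁(θ)^{2k} P₁(θ) cos((2j+1)θ) dθ and B_{2k+1}^{2j+1} = (1/π)∫₀^{2π} P̄₁(θ)^{2k} P₁(θ) sin((2j+1)θ) dθ for the Fourier coefficients of P̄₁^{2k} P₁. Then for each k ≥ 1 and each j with 0 ≤ j ≤ k−1 there exists a real constant μ_{2k+1}^{2j+1}, depending only on k, j and λ, such that A_{2k+1}^{2j+1} = μ_{2k+1}^{2j+1} · A_{2j+1}^{2j+1} and B_{2k+1}^{2j+1} = μ_{2k+1}^{2j+1} · B_{2j+1}^{2j+1}; moreover these constants satisfy the recursion μ_{2k+1}^{2j+1} = ((2k−1)/2)·( (2/(2j−1)) μ_{2k−1}^{2j−1} − (λ²/(2(2j+3))) μ_{2k−1}^{2j+3} ), with μ₃¹ = λ/2, μ_{2k−1}^{−1} = −μ_{2k−1}^{1} μ₃¹, μ_j^j = 1, and μ_i^j = 0 for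 j > i. -/

import Mathlib

open Real

/-!
The idea is that `P̄₁' = P₁`, so `(2k+1) P̄₁^{2k} P₁` is the derivative of `P̄₁^{2k+1}` and one
integration by parts reduces the Fourier coefficients of `P̄₁^{2k} P₁` to those of a power of
`P̄₁ = a e^{iθ} + b e^{-iθ}`, where `ab = λ/2`. By the binomial theorem the coefficient with
index `2j+1` of `P̄₁^{2k+1}` is `(2k+1).choose (k-j)` times `(ab)^{k-j}` times the one of
`P̄₁^{2j+1}`. Hence `μ_i^j = (λ/2)^d (j/i) (i.choose d)` with `d = (i-j)/2`, and the recursion is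
the ballot-number form of Pascal's rule.
-/

section BallotNumbers

variable {R : Type*} [CommRing R]

lemma sub_two_mul_mul_choose_succ (n d : ℕ) :
    ((n : R) + 1 - 2 * (d + 1)) * (n + 1).choose (d + 1) =
      (n + 1) * (n.choose (d + 1) - n.choose d) := by
  have absorption : ((n : R) + 1) * n.choose d = (n + 1).choose (d + 1) * (d + 1) := by
    exact_mod_cast congrArg (Nat.cast : ℕ → R) (Nat.add_one_mul_choose_eq n d)
  have pascal : ((n + 1).choose (d + 1) : R) = n.choose d + n.choose (d + 1) := by
    exact_mod_cast congrArg (Nat.cast : ℕ → R) (Nat.choose_succ_succ n d)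
  linear_combination ((n : R) + 1) * pascal + 2 * absorption

lemma sub_two_mul_mul_choose_add_two (n d : ℕ) :
    ((n : R) + 2 - 2 * (d + 2)) * (n + 2).choose (d + 2) =
      (n + 2) * (n.choose (d + 2) - n.choose d) := by
  have ballot := sub_two_mul_mul_choose_succ (R := R) (n + 1) (d + 1)
  rw [Nat.choose_succ_succ' n (d + 1), Nat.choose_succ_succ' n d] at ballot
  push_cast at ballot
  linear_combination ballot

end BallotNumbers

section FourierRatio

/-- The constant `μ_i^j` by which the `j`-th Fourier coefficients of `P̄₁^{j-1} P₁` are multiplied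
to give those of `P̄₁^{i-1} P₁`. The first two branches are the conventions `μ_i^j = 0` for `i < j`
and `μ_j^j = 1`; the closed form is meant for `i` positive and `i - j` even. -/
noncomputable def fourierRatio (lam : ℝ) (i j : ℤ) : ℝ :=
  if i < j then 0 else if i = j then 1 else
    (lam / 2) ^ ((i - j) / 2).toNat * (j / i) * i.toNat.choose ((i - j) / 2).toNat

variable (lam : ℝ) {i j : ℤ}

lemma fourierRatio_of_lt (h : i < j) : fourierRatio lam i j = 0 := if_pos h

lemma fourierRatio_self (j : ℤ) : fourierRatio lam j j = 1 := by
  simp [fourierRatio]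

lemma fourierRatio_eq_mul_choose {d : ℕ} (hi : 0 < i) (hij : i = j + 2 * d) :
    fourierRatio lam i j = (lam / 2) ^ d * (j / i) * i.toNat.choose d := by
  obtain rfl | hd := eq_or_ne d 0
  · obtain rfl : i = j := by simpa using hij
    have hi' : (i : ℝ) ≠ 0 := by exact_mod_cast hi.ne'
    simp [fourierRatio_self, hi']
  · have half : ((i - j) / 2).toNat = d := by omega
    rw [fourierRatio, if_neg (by omega), if_neg (by omega), half]

lemma fourierRatio_three_one : fourierRatio lam 3 1 = lam / 2 := by
  rw [fourierRatio_eq_mul_choose lam (d := 1) (by norm_num) (by norm_num)]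
  simp

lemma fourierRatio_neg (m d : ℕ) (h : 0 < m + 2 * d) :
    fourierRatio lam (m + 2 * d) (-m) = -(lam / 2) ^ m * fourierRatio lam (m + 2 * d) m := by
  have hi : (0 : ℤ) < m + 2 * d := by exact_mod_cast h
  have symm : (m + 2 * d).choose (m + d) = (m + 2 * d).choose d :=
    Nat.choose_symm_of_eq_add (by ring)
  have toNat_eq : ((m : ℤ) + 2 * d).toNat = m + 2 * d := by omega
  rw [fourierRatio_eq_mul_choose lam (d := m + d) hi (by push_cast; ring),
    fourierRatio_eq_mul_choose lam (d := d) hi rfl, toNat_eq, symm]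
  push_cast
  ring

lemma div_mul_fourierRatio {d : ℕ} (hi : 0 < i) (hj : j ≠ 0) (hij : i = j + 2 * d) :
    i / j * fourierRatio lam i j = (lam / 2) ^ d * i.toNat.choose d := by
  have hiR : (i : ℝ) ≠ 0 := by exact_mod_cast hi.ne'
  have hjR : (j : ℝ) ≠ 0 := by exact_mod_cast hj
  rw [fourierRatio_eq_mul_choose lam hi hij]
  field_simp

lemma fourierRatio_add_two (hi : 0 < i) (hij : Even (i - j)) (hj : j - 2 ≠ 0) (hj' : j + 2 ≠ 0) :
    fourierRatio lam (i + 2) j =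
      i / 2 * (2 / (j - 2) * fourierRatio lam i (j - 2) -
        lam ^ 2 / (2 * (j + 2)) * fourierRatio lam i (j + 2)) := by
  suffices h : fourierRatio lam (i + 2) j = i / (j - 2 : ℤ) * fourierRatio lam i (j - 2) -
      (lam / 2) ^ 2 * (i / (j + 2 : ℤ) * fourierRatio lam i (j + 2)) by
    rw [h, ← div_div]
    push_cast
    ring
  obtain hlt | hle := lt_or_ge (i + 2) j
  · simp [fourierRatio_of_lt lam hlt, fourierRatio_of_lt lam (show i < j - 2 by omega),
      fourierRatio_of_lt lam (show i < j + 2 by omega)]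
  obtain ⟨d, hd⟩ : ∃ d : ℕ, i + 2 = j + 2 * d := by
    obtain ⟨r, hr⟩ := hij
    exact ⟨(r + 1).toNat, by omega⟩
  have hdR : (j : ℝ) = i + 2 - 2 * d := eq_sub_of_add_eq (by exact_mod_cast hd.symm)
  have hiR : (i : ℝ) + 2 ≠ 0 := by exact_mod_cast (by omega : i + 2 ≠ 0)
  have toNat_eq : (i + 2).toNat = i.toNat + 2 := by omega
  have cast_toNat : (i.toNat : ℝ) = i := by exact_mod_cast Int.toNat_of_nonneg hi.le
  rw [fourierRatio_eq_mul_choose lam (by omega) hd,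
    div_mul_fourierRatio lam (d := d) hi hj (by omega), toNat_eq]
  match d with
  | 0 =>
    rw [fourierRatio_of_lt lam (show i < j + 2 by omega)]
    simp only [Nat.cast_zero, mul_zero, sub_zero] at hdR
    simp [hdR, hiR]
  | 1 =>
    rw [fourierRatio_of_lt lam (show i < j + 2 by omega)]
    simp only [Nat.choose_one_right, pow_one, mul_zero, sub_zero]
    push_cast [cast_toNat]
    field_simp
    linear_combination lam * hdR
  | d + 2 =>
    have ballot := sub_two_mul_mul_choose_add_two (R := ℝ) i.toNat d
    push_cast at hdR
    rw [cast_toNat, ← hdR] at ballot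
    rw [div_mul_fourierRatio lam (d := d) hi hj' (by omega)]
    push_cast
    field_simp
    linear_combination lam ^ 2 * (lam / 2) ^ d * ballot

lemma fourierRatio_two_mul_sub_one_neg_one {k : ℕ} (hk : 1 ≤ k) :
    fourierRatio lam (2 * k - 1) (-1) =
      -(fourierRatio lam (2 * k - 1) 1 * fourierRatio lam 3 1) := by
  obtain ⟨d, rfl⟩ := Nat.exists_eq_add_of_le hk
  have reflection := fourierRatio_neg lam 1 d (by omega)
  have index : 2 * ((1 + d : ℕ) : ℤ) - 1 = 1 + 2 * d := by push_cast; ring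
  rw [fourierRatio_three_one, index]
  push_cast at reflection
  linear_combination reflection

lemma fourierRatio_two_mul_add_one {k : ℕ} (hk : 1 ≤ k) (j : ℕ) :
    fourierRatio lam (2 * k + 1) (2 * j + 1) =
      (2 * k - 1) / 2 * (2 / (2 * j - 1) * fourierRatio lam (2 * k - 1) (2 * j - 1) -
        lam ^ 2 / (2 * (2 * j + 3)) * fourierRatio lam (2 * k - 1) (2 * j + 3)) := by
  convert fourierRatio_add_two lam (i := 2 * k - 1) (j := 2 * j + 1) (by omega)
    ⟨k - 1 - j, by ring⟩ (by omega) (by omega) using 1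
  · ring_nf
  · push_cast
    ring_nf

end FourierRatio

section FourierIntegrals

open Complex (I)
open MeasureTheory (volume)

lemma integral_exp_int_mul_mul_I (m : ℤ) :
    ∫ θ in (0 : ℝ)..2 * π, Complex.exp (m * θ * I) = if m = 0 then 2 * (π : ℂ) else 0 := by
  obtain rfl | hm := eq_or_ne m 0
  · simp
  have hmI : (m : ℂ) * I ≠ 0 := mul_ne_zero (by exact_mod_cast hm) Complex.I_ne_zero
  have periodic : Complex.exp (m * I * (2 * π : ℝ)) = 1 := by
    simpa [mul_assoc, mul_comm, mul_left_comm] using Complex.exp_int_mul_two_pi_mul_I m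
  simp_rw [mul_right_comm (m : ℂ) _ I]
  rw [integral_exp_mul_complex hmI, periodic, if_neg hm]
  simp

lemma integral_deriv_mul_exp {f f' : ℝ → ℂ} (hf : ∀ θ, HasDerivAt f (f' θ) θ)
    (hf' : IntervalIntegrable f' volume 0 (2 * π)) (hper : f (2 * π) = f 0) (m : ℤ) :
    ∫ θ in (0 : ℝ)..2 * π, f' θ * Complex.exp (m * θ * I) =
      -(m * I) * ∫ θ in (0 : ℝ)..2 * π, f θ * Complex.exp (m * θ * I) := by
  have hexp (θ : ℝ) : HasDerivAt (fun θ : ℝ ↦ Complex.exp (m * θ * I))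
      (m * I * Complex.exp (m * θ * I)) θ := by
    have linear : HasDerivAt (fun θ : ℝ ↦ (m : ℂ) * θ * I) (m * I) θ := by
      simpa using (Complex.ofRealCLM.hasDerivAt.const_mul (m : ℂ)).mul_const I
    simpa only [mul_comm] using linear.cexp
  have periodic : Complex.exp (m * (2 * π : ℝ) * I) = 1 := by
    simpa [mul_assoc] using Complex.exp_int_mul_two_pi_mul_I m
  have by_parts := intervalIntegral.integral_mul_deriv_eq_deriv_mul
    (fun θ _ ↦ hexp θ) (fun θ _ ↦ hf θ)
    (Continuous.intervalIntegrable (by fun_prop) 0 (2 * π)) hf'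
  rw [periodic, hper] at by_parts
  simp only [Complex.ofReal_zero, mul_zero, zero_mul, Complex.exp_zero, sub_self, zero_sub,
    mul_assoc, intervalIntegral.integral_const_mul] at by_parts
  simp only [mul_comm (f' _), mul_comm (f _), mul_assoc, by_parts]
  ring

lemma integral_mul_exp_eq_cos_add_sin {f : ℝ → ℝ} {x y : ℝ}
    (hf : IntervalIntegrable f volume x y) (w : ℝ) :
    ∫ θ in x..y, (f θ : ℂ) * Complex.exp (w * θ * I) =
      ((∫ θ in x..y, f θ * cos (w * θ) : ℝ) : ℂ) +
        ((∫ θ in x..y, f θ * sin (w * θ) : ℝ) : ℂ) * I := by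
  have hcos : IntervalIntegrable (fun θ ↦ f θ * cos (w * θ)) volume x y :=
    hf.mul_continuousOn (by fun_prop)
  have hsin : IntervalIntegrable (fun θ ↦ f θ * sin (w * θ)) volume x y :=
    hf.mul_continuousOn (by fun_prop)
  have ofReal {g : ℝ → ℝ} (hg : IntervalIntegrable g volume x y) :
      IntervalIntegrable (fun θ ↦ (g θ : ℂ)) volume x y :=
    ⟨hg.1.ofReal, hg.2.ofReal⟩
  rw [← intervalIntegral.integral_ofReal, ← intervalIntegral.integral_ofReal,
    ← intervalIntegral.integral_mul_const,
    ← intervalIntegral.integral_add (ofReal hcos) ((ofReal hsin).mul_const I)]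
  refine intervalIntegral.integral_congr fun θ _ ↦ ?_
  simp only [Complex.exp_mul_I]
  push_cast
  ring

/-- The trigonometric polynomial `a e^{iθ} + b e^{-iθ}`, the complex form of `P̄₁` and of `P₁`. -/
noncomputable def expBinomial (a b : ℂ) (θ : ℝ) : ℂ :=
  a * Complex.exp (θ * I) + b * Complex.exp (-θ * I)

lemma hasDerivAt_expBinomial (a b : ℂ) (θ : ℝ) :
    HasDerivAt (expBinomial a b) (expBinomial (a * I) (-(b * I)) θ) θ := by
  have hθ : HasDerivAt (fun θ : ℝ ↦ (θ : ℂ) * I) I θ := by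
    simpa using Complex.ofRealCLM.hasDerivAt.mul_const I
  have hnegθ : HasDerivAt (fun θ : ℝ ↦ -(θ : ℂ) * I) (-I) θ := by
    simpa only [neg_mul] using hθ.fun_neg
  refine ((hθ.cexp.const_mul a).add (hnegθ.cexp.const_mul b)).congr_deriv ?_
  simp only [expBinomial]
  ring

lemma continuous_expBinomial (a b : ℂ) : Continuous (expBinomial a b) := by
  unfold expBinomial
  fun_prop

lemma expBinomial_two_pi (a b : ℂ) : expBinomial a b (2 * π) = expBinomial a b 0 := by
  simp [expBinomial, Complex.exp_neg]

lemma expBinomial_pow_mul_exp (a b : ℂ) (n : ℕ) (m : ℤ) (θ : ℝ) :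
    expBinomial a b θ ^ n * Complex.exp (m * θ * I) =
      ∑ p ∈ Finset.range (n + 1), a ^ p * b ^ (n - p) * n.choose p *
        Complex.exp ((2 * p - n + m : ℤ) * θ * I) := by
  rw [expBinomial, add_pow, Finset.sum_mul]
  refine Finset.sum_congr rfl fun p hp ↦ ?_
  have hpn : p ≤ n := Finset.mem_range_succ_iff.1 hp
  have exponents : Complex.exp ((2 * p - n + m : ℤ) * θ * I) =
      Complex.exp (θ * I) ^ p * Complex.exp (-θ * I) ^ (n - p) * Complex.exp (m * θ * I) := by
    rw [← Complex.exp_nat_mul, ← Complex.exp_nat_mul, ← Complex.exp_add, ← Complex.exp_add]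
    push_cast [Nat.cast_sub hpn]
    ring_nf
  rw [exponents, mul_pow, mul_pow]
  ring

lemma integral_expBinomial_pow_mul_exp (a b : ℂ) (p q : ℕ) :
    ∫ θ in (0 : ℝ)..2 * π, expBinomial a b θ ^ (p + q) * Complex.exp ((q - p : ℤ) * θ * I) =
      a ^ p * b ^ q * (p + q).choose p * (2 * π) := by
  simp_rw [expBinomial_pow_mul_exp]
  rw [intervalIntegral.integral_finsetSum
    fun _ _ ↦ Continuous.intervalIntegrable (by fun_prop) _ _]
  simp_rw [intervalIntegral.integral_const_mul, integral_exp_int_mul_mul_I]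
  rw [Finset.sum_eq_single p]
  · rw [if_pos (by push_cast; ring), Nat.add_sub_cancel_left]
  · intro r _ hr
    rw [if_neg (by push_cast; omega), mul_zero]
  · intro hp
    exact absurd (Finset.mem_range_succ_iff.2 (Nat.le_add_right p q)) hp

lemma integral_expBinomial_pow_mul_deriv_mul_exp (a b : ℂ) {n p q : ℕ} (h : n + 1 = p + q) :
    (n + 1) * ∫ θ in (0 : ℝ)..2 * π, expBinomial a b θ ^ n *
        expBinomial (a * I) (-(b * I)) θ * Complex.exp ((q - p : ℤ) * θ * I) =
      -((q - p : ℤ) * I) * (a ^ p * b ^ q * (p + q).choose p * (2 * π)) := by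
  have hderiv (θ : ℝ) : HasDerivAt (fun θ ↦ expBinomial a b θ ^ (n + 1))
      ((n + 1) * (expBinomial a b θ ^ n * expBinomial (a * I) (-(b * I)) θ)) θ := by
    simpa [mul_assoc] using (hasDerivAt_expBinomial a b θ).fun_pow (n + 1)
  have hcont := continuous_expBinomial a b
  have hcont' := continuous_expBinomial (a * I) (-(b * I))
  have by_parts := integral_deriv_mul_exp hderiv
    (Continuous.intervalIntegrable (by fun_prop) _ _) (by simp only [expBinomial_two_pi]) (q - p)
  rw [h, integral_expBinomial_pow_mul_exp] at by_parts
  rw [← by_parts, ← intervalIntegral.integral_const_mul]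
  simp only [mul_assoc]

lemma integral_expBinomial_pow_mul_deriv_mul_exp_eq_mul (a b : ℂ) (m d : ℕ) :
    ∫ θ in (0 : ℝ)..2 * π, expBinomial a b θ ^ (m + 2 * d) *
        expBinomial (a * I) (-(b * I)) θ * Complex.exp ((m + 1 : ℤ) * θ * I) =
      ((a * b) ^ d * (m + 1) * (m + 1 + 2 * d).choose d *
        ∫ θ in (0 : ℝ)..2 * π, expBinomial a b θ ^ m *
          expBinomial (a * I) (-(b * I)) θ * Complex.exp ((m + 1 : ℤ) * θ * I)) /
        (m + 1 + 2 * d) := by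
  have high := integral_expBinomial_pow_mul_deriv_mul_exp a b
    (show m + 2 * d + 1 = d + (m + 1 + d) by ring)
  have low := integral_expBinomial_pow_mul_deriv_mul_exp a b (show m + 1 = 0 + (m + 1) by ring)
  rw [show ((m + 1 + d : ℕ) - d : ℤ) = m + 1 by push_cast; ring,
    show d + (m + 1 + d) = m + 1 + 2 * d by ring] at high
  rw [show ((m + 1 : ℕ) - (0 : ℕ) : ℤ) = m + 1 by push_cast; ring] at low
  simp only [pow_zero, one_mul, Nat.choose_zero_right, Nat.cast_one, mul_one] at low
  have hmd : (m : ℂ) + 1 + 2 * d ≠ 0 := by exact_mod_cast (by omega : m + 1 + 2 * d ≠ 0)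
  rw [eq_div_iff hmd]
  push_cast at high low ⊢
  linear_combination high - (a * b) ^ d * (m + 1 + 2 * d).choose d * low

end FourierIntegrals

section RealCoefficients

open Complex (I)
open MeasureTheory (volume)

variable (A B : ℝ)

lemma ofReal_mul_sin_sub_mul_cos (θ : ℝ) :
    ((A * sin θ - B * cos θ : ℝ) : ℂ) =
      expBinomial (-(B + A * I) / 2) (-(B - A * I) / 2) θ := by
  simp only [expBinomial, Complex.exp_mul_I, Complex.cos_neg, Complex.sin_neg]
  push_cast
  linear_combination (A * Complex.sin θ) * Complex.I_sq

lemma ofReal_mul_cos_add_mul_sin (θ : ℝ) :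
    ((A * cos θ + B * sin θ : ℝ) : ℂ) =
      expBinomial (-(B + A * I) / 2 * I) (-(-(B - A * I) / 2 * I)) θ := by
  simp only [expBinomial, Complex.exp_mul_I, Complex.cos_neg, Complex.sin_neg]
  push_cast
  linear_combination (A * Complex.cos θ + B * Complex.sin θ) * Complex.I_sq

lemma integral_pow_mul_deriv_mul_exp (m d : ℕ) :
    ∫ θ in (0 : ℝ)..2 * π, (((A * sin θ - B * cos θ) ^ (m + 2 * d) *
        (A * cos θ + B * sin θ) : ℝ) : ℂ) * Complex.exp ((m + 1 : ℝ) * θ * I) =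
      fourierRatio ((A ^ 2 + B ^ 2) / 2) (m + 1 + 2 * d) (m + 1) *
        ∫ θ in (0 : ℝ)..2 * π, (((A * sin θ - B * cos θ) ^ m *
          (A * cos θ + B * sin θ) : ℝ) : ℂ) * Complex.exp ((m + 1 : ℝ) * θ * I) := by
  have hprod : (-(B + A * I) / 2) * (-(B - A * I) / 2) = ((A : ℂ) ^ 2 + B ^ 2) / 2 / 2 := by
    linear_combination (-(A : ℂ) ^ 2 / 4) * Complex.I_sq
  have ratio := integral_expBinomial_pow_mul_deriv_mul_exp_eq_mul
    (-(B + A * I) / 2) (-(B - A * I) / 2) m d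
  have toNat_eq : ((m : ℤ) + 1 + 2 * d).toNat = m + 1 + 2 * d := by omega
  rw [fourierRatio_eq_mul_choose _ (by omega) rfl, toNat_eq]
  simp only [Complex.ofReal_mul, Complex.ofReal_pow, ofReal_mul_sin_sub_mul_cos,
    ofReal_mul_cos_add_mul_sin]
  rw [hprod] at ratio
  push_cast at ratio ⊢
  rw [ratio]
  ring

lemma integral_pow_mul_deriv_mul_cos_and_sin (m d : ℕ) :
    (∫ θ in (0 : ℝ)..2 * π, (A * sin θ - B * cos θ) ^ (m + 2 * d) *
        (A * cos θ + B * sin θ) * cos ((m + 1) * θ) =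
      fourierRatio ((A ^ 2 + B ^ 2) / 2) (m + 1 + 2 * d) (m + 1) *
        ∫ θ in (0 : ℝ)..2 * π, (A * sin θ - B * cos θ) ^ m *
          (A * cos θ + B * sin θ) * cos ((m + 1) * θ)) ∧
    (∫ θ in (0 : ℝ)..2 * π, (A * sin θ - B * cos θ) ^ (m + 2 * d) *
        (A * cos θ + B * sin θ) * sin ((m + 1) * θ) =
      fourierRatio ((A ^ 2 + B ^ 2) / 2) (m + 1 + 2 * d) (m + 1) *
        ∫ θ in (0 : ℝ)..2 * π, (A * sin θ - B * cos θ) ^ m *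
          (A * cos θ + B * sin θ) * sin ((m + 1) * θ)) := by
  have integrable (n : ℕ) : IntervalIntegrable (fun θ ↦ (A * sin θ - B * cos θ) ^ n *
      (A * cos θ + B * sin θ)) volume 0 (2 * π) :=
    Continuous.intervalIntegrable (by fun_prop) _ _
  have ratio := integral_pow_mul_deriv_mul_exp A B m d
  rw [integral_mul_exp_eq_cos_add_sin (integrable _),
    integral_mul_exp_eq_cos_add_sin (integrable _)] at ratio
  exact ⟨by simpa using congrArg Complex.re ratio, by simpa using congrArg Complex.im ratio⟩

end RealCoefficients

/-- Lemma 3.3: writing `P̄₁^{2k} P₁ = ∑_{j=0}^{k} (A_{2k+1}^{2j+1} cos(2j+1)θ +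
B_{2k+1}^{2j+1} sin(2j+1)θ)`, there are constants `μ_{2k+1}^{2j+1}` with
`A_{2k+1}^{2j+1} = μ_{2k+1}^{2j+1} A_{2j+1}^{2j+1}`,
`B_{2k+1}^{2j+1} = μ_{2k+1}^{2j+1} B_{2j+1}^{2j+1}`, satisfying the recursion
`μ_{2k+1}^{2j+1} = ((2k−1)/2)((2/(2j−1)) μ_{2k−1}^{2j−1} − (λ²/(2(2j+3))) μ_{2k−1}^{2j+3})`
with `μ₃¹ = λ/2`, `μ_{2k−1}^{−1} = −μ_{2k−1}^{1} μ₃¹`, `μ_j^j = 1`, `μ_i^j = 0` for `j > i`. -/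
theorem fourier_coeff_proportionality
    (A B : ℝ) (hAB : A ^ 2 + B ^ 2 ≠ 0)
    (P1 Pb : ℝ → ℝ) (lam : ℝ)
    (hP1 : ∀ θ, P1 θ = A * Real.cos θ + B * Real.sin θ)
    (hPb : ∀ θ, Pb θ = A * Real.sin θ - B * Real.cos θ)
    (hlam : lam = (A ^ 2 + B ^ 2) / 2)
    (Aco Bco : ℕ → ℕ → ℝ)
    (hAco : ∀ k j : ℕ, Aco k j = (1 / Real.pi) *
      ∫ θ in (0 : ℝ)..(2 * Real.pi), Pb θ ^ (2 * k) * P1 θ * Real.cos ((2 * (j : ℝ) + 1) * θ))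
    (hBco : ∀ k j : ℕ, Bco k j = (1 / Real.pi) *
      ∫ θ in (0 : ℝ)..(2 * Real.pi), Pb θ ^ (2 * k) * P1 θ * Real.sin ((2 * (j : ℝ) + 1) * θ)) :
    ∃ μ : ℤ → ℤ → ℝ,
      μ 3 1 = lam / 2 ∧
      (∀ i j : ℤ, i < j → μ i j = 0) ∧
      (∀ j : ℤ, μ j j = 1) ∧
      (∀ k : ℕ, 1 ≤ k → μ (2 * (k : ℤ) - 1) (-1) = -(μ (2 * (k : ℤ) - 1) 1 * μ 3 1)) ∧
      (∀ k j : ℕ, 1 ≤ k → j ≤ k - 1 →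
        Aco k j = μ (2 * (k : ℤ) + 1) (2 * (j : ℤ) + 1) * Aco j j ∧
        Bco k j = μ (2 * (k : ℤ) + 1) (2 * (j : ℤ) + 1) * Bco j j ∧
        μ (2 * (k : ℤ) + 1) (2 * (j : ℤ) + 1) =
          ((2 * (k : ℝ) - 1) / 2) *
            ((2 / (2 * (j : ℝ) - 1)) * μ (2 * (k : ℤ) - 1) (2 * (j : ℤ) - 1) -
              (lam ^ 2 / (2 * (2 * (j : ℝ) + 3))) * μ (2 * (k : ℤ) - 1) (2 * (j : ℤ) + 3))) := by
  refine ⟨fourierRatio lam, fourierRatio_three_one lam, fun _ _ ↦ fourierRatio_of_lt lam,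
    fourierRatio_self lam, fun _ ↦ fourierRatio_two_mul_sub_one_neg_one lam, fun k j hk hj ↦ ?_⟩
  obtain ⟨d, rfl⟩ := Nat.exists_eq_add_of_le (by omega : j ≤ k)
  obtain ⟨hcos, hsin⟩ := integral_pow_mul_deriv_mul_cos_and_sin A B (2 * j) d
  have index : ((2 * j : ℕ) : ℤ) + 1 + 2 * d = 2 * (j + d : ℕ) + 1 := by push_cast; ring
  rw [← hlam, index] at hcos hsin
  push_cast [← mul_add] at hcos hsin
  refine ⟨?_, ?_, fourierRatio_two_mul_add_one lam hk j⟩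
  · simp only [hAco, hP1, hPb]
    rw [hcos, Nat.cast_add, mul_left_comm]
  · simp only [hBco, hP1, hPb]
    rw [hsin, Nat.cast_add, mul_left_comm]
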